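/- Let α : ℝ × ℝ → ℝ³ be a smooth solution of the vortex filament equation α_t = α_s ×_L α_ss in Minkowski 3-space such that each curve α(·,t) is a unit-speed spacelike curve with timelike principal normal, with smooth Frenet frame (T, N, B) satisfying ⟨T,T⟩_L = ⟨B,B⟩_L = 1, ⟨N,N⟩_L = −1, α_t = κB, and Frenet equations Tₛ = κN, Nₛ = κT + τB, Bₛ = τN with κ > 0. Then there exist smooth maps E₁, E₂ : ℝ × ℝ → ℝ³ and smooth functions k₁, k₂ : ℝ × ℝ → ℝ such that (T, E₁, E₂) is pairwise ⟨·,·⟩_L-orthogonal with ⟨E₁,E₁⟩_L = −1, ⟨E₂,E₂⟩_L = 1, and Tₛ = k₁E₁ + k₂E₂, (E₁)ₛ = k₁T, (E₂)ₛ = −k₂T, and T_t = (k₂)ₛE₁ + (k₁)ₛE₂, (E₁)_t = (k₂)ₛT + ½(k₁² − k₂²)E₂, (E₂)_t = −(k₁)ₛT + ½(k₁² − k₂²)E₁. -/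

import Mathlib

noncomputable section

open Real

/-- Minkowski 3-space: ℝ³ as a vector type. -/
abbrev V3 : Type := Fin 3 → ℝ

/-- Lorentzian inner product ⟨x,y⟩_L = −x₁y₁ + x₂y₂ + x₃y₃ on ℝ³. -/
def lor (x y : V3) : ℝ := -(x 0 * y 0) + x 1 * y 1 + x 2 * y 2

/-- Lorentzian cross product x ×_L y = (x₃y₂ − x₂y₃, x₃y₁ − x₁y₃, x₁y₂ − x₂y₁). -/
def lcross (x y : V3) : V3 :=
  ![x 2 * y 1 - x 1 * y 2, x 2 * y 0 - x 0 * y 2, x 0 * y 1 - x 1 * y 0]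

/-- Partial derivative with respect to the first variable `s`. -/
def pds {E : Type*} [NormedAddCommGroup E] [NormedSpace ℝ E]
    (f : ℝ × ℝ → E) (p : ℝ × ℝ) : E := deriv (fun s => f (s, p.2)) p.1

/-- Partial derivative with respect to the second variable `t`. -/
def pdt {E : Type*} [NormedAddCommGroup E] [NormedSpace ℝ E]
    (f : ℝ × ℝ → E) (p : ℝ × ℝ) : E := deriv (fun t => f (p.1, t)) p.2

/-!
Differentiating `α_t = κB` in `s` shows that along the flow the frame satisfies
`T_t = κτ N + κₛ B`, and orthonormality then leaves one unknown coefficient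
`ρ = ⟨N_t, B⟩_L` in `N_t` and `B_t`. Comparing `N_st` with `N_ts` gives `τ_t = ρₛ - κκₛ`, so the
1-form `-τ ds + (κ²/2 - ρ) dt` is closed and has a potential `θ` on the plane. Boosting the
normal plane by the angle `θ` adds `θₛ` to `τ` and `θ_t` to `ρ`: the new normal frame no longer
rotates in `s` and rotates at rate `κ²/2 = (k₁² - k₂²)/2` in `t`, where `k₁ = κ cosh θ` and
`k₂ = -κ sinh θ`.
-/

open scoped ContDiff Matrix

section PartialDerivatives

variable {E : Type*} [NormedAddCommGroup E] [NormedSpace ℝ E] {f g : ℝ × ℝ → E} {p : ℝ × ℝ}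

theorem hasDerivAt_fst_slice {f' : ℝ × ℝ →L[ℝ] E} (hf : HasFDerivAt f f' p) :
    HasDerivAt (fun s ↦ f (s, p.2)) (f' (1, 0)) p.1 :=
  HasFDerivAt.comp_hasDerivAt (f := fun s ↦ (s, p.2)) p.1 hf
    ((hasDerivAt_id p.1).prodMk (hasDerivAt_const p.1 p.2))

theorem hasDerivAt_snd_slice {f' : ℝ × ℝ →L[ℝ] E} (hf : HasFDerivAt f f' p) :
    HasDerivAt (fun t ↦ f (p.1, t)) (f' (0, 1)) p.2 :=
  HasFDerivAt.comp_hasDerivAt (f := fun t ↦ (p.1, t)) p.2 hf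
    ((hasDerivAt_const p.2 p.1).prodMk (hasDerivAt_id p.2))

theorem hasDerivAt_pds (hf : DifferentiableAt ℝ f p) :
    HasDerivAt (fun s ↦ f (s, p.2)) (pds f p) p.1 :=
  (hasDerivAt_fst_slice hf.hasFDerivAt).differentiableAt.hasDerivAt

theorem hasDerivAt_pdt (hf : DifferentiableAt ℝ f p) :
    HasDerivAt (fun t ↦ f (p.1, t)) (pdt f p) p.2 :=
  (hasDerivAt_snd_slice hf.hasFDerivAt).differentiableAt.hasDerivAt

theorem pds_eq_fderiv (hf : Differentiable ℝ f) : pds f = fun p ↦ fderiv ℝ f p (1, 0) :=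
  funext fun p ↦ (hasDerivAt_fst_slice (hf p).hasFDerivAt).deriv

theorem pdt_eq_fderiv (hf : Differentiable ℝ f) : pdt f = fun p ↦ fderiv ℝ f p (0, 1) :=
  funext fun p ↦ (hasDerivAt_snd_slice (hf p).hasFDerivAt).deriv

theorem contDiff_pds {m n : ℕ∞ω} (hf : ContDiff ℝ n f) (hmn : m + 1 ≤ n) :
    ContDiff ℝ m (pds f) := by
  rw [pds_eq_fderiv ((hf.of_le hmn).differentiable (by simp))]
  exact (hf.fderiv_right hmn).clm_apply contDiff_const

theorem contDiff_pdt {m n : ℕ∞ω} (hf : ContDiff ℝ n f) (hmn : m + 1 ≤ n) :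
    ContDiff ℝ m (pdt f) := by
  rw [pdt_eq_fderiv ((hf.of_le hmn).differentiable (by simp))]
  exact (hf.fderiv_right hmn).clm_apply contDiff_const

theorem pdt_pds_comm (hf : ContDiff ℝ 2 f) (p : ℝ × ℝ) : pdt (pds f) p = pds (pdt f) p := by
  have hf₁ : Differentiable ℝ f := hf.differentiable (by simp)
  have hf₂ : DifferentiableAt ℝ (fderiv ℝ f) p :=
    (hf.fderiv_right (m := 1) (by norm_num)).differentiable (by simp) p
  have hsymm : IsSymmSndFDerivAt ℝ f p := hf.contDiffAt.isSymmSndFDerivAt (by simp)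
  have hpds : HasFDerivAt (pds f) ((fderiv ℝ (fderiv ℝ f) p).flip (1, 0)) p := by
    simpa [pds_eq_fderiv hf₁] using hf₂.hasFDerivAt.clm_apply (hasFDerivAt_const (1, 0) p)
  have hpdt : HasFDerivAt (pdt f) ((fderiv ℝ (fderiv ℝ f) p).flip (0, 1)) p := by
    simpa [pdt_eq_fderiv hf₁] using hf₂.hasFDerivAt.clm_apply (hasFDerivAt_const (0, 1) p)
  calc pdt (pds f) p = fderiv ℝ (fderiv ℝ f) p (0, 1) (1, 0) := (hasDerivAt_snd_slice hpds).deriv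
    _ = fderiv ℝ (fderiv ℝ f) p (1, 0) (0, 1) := hsymm _ _
    _ = pds (pdt f) p := (hasDerivAt_fst_slice hpdt).deriv.symm

theorem fderiv_apply_eq_pds_add_pdt (hf : Differentiable ℝ f) (p u : ℝ × ℝ) :
    fderiv ℝ f p u = u.1 • pds f p + u.2 • pdt f p := by
  have hu : u = u.1 • ((1 : ℝ), (0 : ℝ)) + u.2 • ((0 : ℝ), (1 : ℝ)) := by ext <;> simp
  rw [pds_eq_fderiv hf, pdt_eq_fderiv hf, ← map_smul, ← map_smul, ← map_add, ← hu]

/-- The `E`-valued 1-form `f ds + g dt` on the plane. -/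
def oneForm (f g : ℝ × ℝ → E) (p : ℝ × ℝ) : ℝ × ℝ →L[ℝ] E :=
  (ContinuousLinearMap.fst ℝ ℝ ℝ).smulRight (f p) + (ContinuousLinearMap.snd ℝ ℝ ℝ).smulRight (g p)

theorem contDiff_oneForm {n : ℕ∞ω} (hf : ContDiff ℝ n f) (hg : ContDiff ℝ n g) :
    ContDiff ℝ n (oneForm f g) :=
  (contDiff_const.smulRight hf).add (contDiff_const.smulRight hg)

theorem fderiv_oneForm_symm (hf : Differentiable ℝ f) (hg : Differentiable ℝ g)
    (hfg : pdt f p = pds g p) (u v : ℝ × ℝ) :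
    fderiv ℝ (oneForm f g) p u v = fderiv ℝ (oneForm f g) p v u := by
  have hderiv (u v : ℝ × ℝ) :
      fderiv ℝ (oneForm f g) p u v = v.1 • fderiv ℝ f p u + v.2 • fderiv ℝ g p u := by
    have hform : HasFDerivAt (oneForm f g) _ p :=
      (((ContinuousLinearMap.smulRightL ℝ (ℝ × ℝ) E (.fst ℝ ℝ ℝ)).hasFDerivAt.comp p
        (hf p).hasFDerivAt).add
      ((ContinuousLinearMap.smulRightL ℝ (ℝ × ℝ) E (.snd ℝ ℝ ℝ)).hasFDerivAt.comp p
        (hg p).hasFDerivAt))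
    simp [hform.fderiv]
  rw [hderiv, hderiv]
  simp only [fderiv_apply_eq_pds_add_pdt hf, fderiv_apply_eq_pds_add_pdt hg, hfg]
  module

theorem exists_contDiff_pds_eq_pdt_eq [CompleteSpace E] (hf : ContDiff ℝ ∞ f)
    (hg : ContDiff ℝ ∞ g) (hfg : ∀ p, pdt f p = pds g p) :
    ∃ θ : ℝ × ℝ → E, ContDiff ℝ ∞ θ ∧ (∀ p, pds θ p = f p) ∧ ∀ p, pdt θ p = g p := by
  have hform : ContDiff ℝ ∞ (oneForm f g) := contDiff_oneForm hf hg
  obtain ⟨θ, hθ⟩ := convex_univ.exists_forall_hasFDerivAt_of_fderiv_symmetric isOpen_univ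
    (hform.differentiable (by simp)).differentiableOn fun p _ ↦
      fderiv_oneForm_symm (hf.differentiable (by simp)) (hg.differentiable (by simp)) (hfg p)
  replace hθ (p) : HasFDerivAt θ (oneForm f g p) p := hθ p trivial
  refine ⟨θ, contDiff_infty_iff_fderiv.2 ⟨fun p ↦ (hθ p).differentiableAt, ?_⟩, fun p ↦ ?_,
    fun p ↦ ?_⟩
  · rwa [show fderiv ℝ θ = oneForm f g from funext fun p ↦ (hθ p).fderiv]
  · exact (hasDerivAt_fst_slice (hθ p)).deriv.trans (by simp [oneForm])
  · exact (hasDerivAt_snd_slice (hθ p)).deriv.trans (by simp [oneForm])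

end PartialDerivatives

section LorentzianProduct

theorem lor_comm (x y : V3) : lor x y = lor y x := by
  simp only [lor]; ring

theorem lor_add_left (x y z : V3) : lor (x + y) z = lor x z + lor y z := by
  simp only [lor, Pi.add_apply]; ring

theorem lor_smul_left (c : ℝ) (x y : V3) : lor (c • x) y = c * lor x y := by
  simp only [lor, Pi.smul_apply, smul_eq_mul]; ring

theorem lor_add_right (x y z : V3) : lor x (y + z) = lor x y + lor x z := by
  simp only [lor_comm x, lor_add_left]

theorem lor_smul_right (c : ℝ) (x y : V3) : lor x (c • y) = c * lor x y := by
  simp only [lor_comm x, lor_smul_left]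

theorem lor_lcross_left (x y : V3) : lor x (lcross x y) = 0 := by
  simp only [lor, lcross, Matrix.cons_val]; ring

theorem lor_lcross_right (x y : V3) : lor y (lcross x y) = 0 := by
  simp only [lor, lcross, Matrix.cons_val]; ring

theorem lor_lcross_self (x y : V3) :
    lor (lcross x y) (lcross x y) = lor x y ^ 2 - lor x x * lor y y := by
  simp only [lor, lcross, Matrix.cons_val]; ring

theorem lcross_smul_right (c : ℝ) (x y : V3) : lcross x (c • y) = c • lcross x y := by
  ext i
  fin_cases i <;> simp [lcross] <;> ring

theorem contDiff_lor {E : Type*} [NormedAddCommGroup E] [NormedSpace ℝ E] {n : ℕ∞ω}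
    {f g : E → V3} (hf : ContDiff ℝ n f) (hg : ContDiff ℝ n g) :
    ContDiff ℝ n fun x ↦ lor (f x) (g x) := by
  unfold lor
  fun_prop

variable {f g : ℝ → V3} {f' g' : V3} {x : ℝ}

theorem hasDerivAt_lor (hf : HasDerivAt f f' x) (hg : HasDerivAt g g' x) :
    HasDerivAt (fun s ↦ lor (f s) (g s)) (lor f' (g x) + lor (f x) g') x := by
  have hf := hasDerivAt_pi.1 hf
  have hg := hasDerivAt_pi.1 hg
  refine (((((hf 0).mul (hg 0)).neg).add ((hf 1).mul (hg 1))).add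
    ((hf 2).mul (hg 2))).congr_deriv ?_
  simp only [lor]
  ring

theorem lor_deriv_add_lor_deriv_eq_zero {c : ℝ} (hfg : ∀ s, lor (f s) (g s) = c)
    (hf : HasDerivAt f f' x) (hg : HasDerivAt g g' x) : lor f' (g x) + lor (f x) g' = 0 :=
  (hasDerivAt_lor hf hg).unique (by simpa only [hfg] using hasDerivAt_const x c)

theorem lor_deriv_self_eq_zero {c : ℝ} (hff : ∀ s, lor (f s) (f s) = c)
    (hf : HasDerivAt f f' x) : lor f' (f x) = 0 := by
  have := lor_deriv_add_lor_deriv_eq_zero hff hf hf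
  rw [lor_comm (f x)] at this
  linarith

end LorentzianProduct

section Boost

variable {V : Type*} [NormedAddCommGroup V] [NormedSpace ℝ V]

/-- Image of `v` under the hyperbolic rotation by the angle `θ` of the plane spanned by `v` and
`w`; the image of `w` is `boost θ w v`. -/
def boost (θ : ℝ) (v w : V) : V := cosh θ • v + sinh θ • w

theorem contDiff_boost {E : Type*} [NormedAddCommGroup E] [NormedSpace ℝ E] {n : ℕ∞ω}
    {θ : E → ℝ} {v w : E → V} (hθ : ContDiff ℝ n θ) (hv : ContDiff ℝ n v) (hw : ContDiff ℝ n w) :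
    ContDiff ℝ n fun x ↦ boost (θ x) (v x) (w x) :=
  (hθ.cosh.smul hv).add (hθ.sinh.smul hw)

variable {x : ℝ}

theorem hasDerivAt_boost {θ : ℝ → ℝ} {v w : ℝ → V} {θ' : ℝ} {v' w' : V} (hθ : HasDerivAt θ θ' x)
    (hv : HasDerivAt v v' x) (hw : HasDerivAt w w' x) :
    HasDerivAt (fun y ↦ boost (θ y) (v y) (w y))
      (boost (θ x) v' w' + θ' • boost (θ x) (w x) (v x)) x := by
  refine ((hθ.cosh.smul hv).add (hθ.sinh.smul hw)).congr_deriv ?_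
  simp only [boost]
  module

theorem smul_add_smul_eq_boost (θ a b : ℝ) (v w : V) :
    a • v + b • w = (a * cosh θ - b * sinh θ) • boost θ v w +
      (b * cosh θ - a * sinh θ) • boost θ w v := by
  simp only [boost]
  linear_combination (norm := module) -cosh_sq_sub_sinh_sq θ • (a • v + b • w)

/-- The moving frame `(T, N, B)` is differentiable at `x` with
`T' = aN + bB`, `N' = aT + cB`, `B' = -bT + cN`: an infinitesimal isometry of the signature
`(+, -, +)`, written in the frame itself. -/
structure HasFrameDerivAt (T N B : ℝ → V) (a b c x : ℝ) : Prop where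
  tangent : HasDerivAt T (a • N x + b • B x) x
  normal : HasDerivAt N (a • T x + c • B x) x
  binormal : HasDerivAt B (-b • T x + c • N x) x

/-- `HasFrameDerivAt` along every line `t = const`, with coefficient functions on the plane. -/
def HasFrameDerivS (T N B : ℝ × ℝ → V) (a b c : ℝ × ℝ → ℝ) : Prop :=
  ∀ p : ℝ × ℝ, HasFrameDerivAt (fun s ↦ T (s, p.2)) (fun s ↦ N (s, p.2)) (fun s ↦ B (s, p.2))
    (a p) (b p) (c p) p.1

/-- `HasFrameDerivAt` along every line `s = const`, with coefficient functions on the plane. -/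
def HasFrameDerivT (T N B : ℝ × ℝ → V) (a b c : ℝ × ℝ → ℝ) : Prop :=
  ∀ p : ℝ × ℝ, HasFrameDerivAt (fun t ↦ T (p.1, t)) (fun t ↦ N (p.1, t)) (fun t ↦ B (p.1, t))
    (a p) (b p) (c p) p.2

theorem HasFrameDerivAt.boost {T N B : ℝ → V} {θ : ℝ → ℝ} {a b c θ' : ℝ}
    (h : HasFrameDerivAt T N B a b c x) (hθ : HasDerivAt θ θ' x) :
    HasFrameDerivAt T (fun y ↦ boost (θ y) (N y) (B y)) (fun y ↦ boost (θ y) (B y) (N y))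
      (a * cosh (θ x) - b * sinh (θ x)) (b * cosh (θ x) - a * sinh (θ x)) (c + θ') x where
  tangent := h.tangent.congr_deriv (smul_add_smul_eq_boost ..)
  normal := (hasDerivAt_boost hθ h.normal h.binormal).congr_deriv
    (by simp only [_root_.boost]; module)
  binormal := (hasDerivAt_boost hθ h.binormal h.normal).congr_deriv
    (by simp only [_root_.boost]; module)

end Boost

/-- `(u, v, w)` is an orthonormal basis of Minkowski space in which `v` is the timelike vector. -/
structure IsLorentzFrame (u v w : V3) : Prop where
  lor_uu : lor u u = 1
  lor_vv : lor v v = -1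
  lor_ww : lor w w = 1
  lor_uv : lor u v = 0
  lor_uw : lor u w = 0
  lor_vw : lor v w = 0

section LorentzFrame

theorem isLorentzFrame_lcross {u v : V3} (huu : lor u u = 1) (hvv : lor v v = -1)
    (huv : lor u v = 0) : IsLorentzFrame u v (lcross u v) where
  lor_uu := huu
  lor_vv := hvv
  lor_ww := by rw [lor_lcross_self, huu, hvv, huv]; norm_num
  lor_uv := huv
  lor_uw := lor_lcross_left u v
  lor_vw := lor_lcross_right u v

theorem IsLorentzFrame.eq_sum {u v w : V3} (h : IsLorentzFrame u v w) (x : V3) :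
    x = lor x u • u + -lor x v • v + lor x w • w := by
  let F : Matrix (Fin 3) (Fin 3) ℝ := .of ![u, v, w]
  -- `G = η Fᵀ ε` with `η = diag(-1, 1, 1)` and `ε = diag(1, -1, 1)`, so `F * G` is the Gram
  -- matrix of the frame times `ε`.
  let G : Matrix (Fin 3) (Fin 3) ℝ :=
    !![-u 0, v 0, -w 0; u 1, -v 1, w 1; u 2, -v 2, w 2]
  have hFG : F * G = 1 := by
    obtain ⟨huu, hvv, hww, huv, huw, hvw⟩ := h
    simp only [lor] at huu hvv hww huv huw hvw
    ext i j
    fin_cases i <;> fin_cases j <;> simp [F, G, Matrix.mul_apply, Fin.sum_univ_three] <;> linarith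
  have hxG : x ᵥ* G = ![lor x u, -lor x v, lor x w] := by
    ext i
    fin_cases i <;> simp [G, lor, Matrix.vecMul, dotProduct, Fin.sum_univ_three]
    ring
  calc x = x ᵥ* G ᵥ* F := by rw [Matrix.vecMul_vecMul, mul_eq_one_comm.1 hFG, Matrix.vecMul_one]
    _ = _ := by
      rw [hxG]
      ext i
      simp [F, Matrix.vecMul, dotProduct, Fin.sum_univ_three]

theorem IsLorentzFrame.boost {u v w : V3} (h : IsLorentzFrame u v w) (θ : ℝ) :
    IsLorentzFrame u (boost θ v w) (boost θ w v) := by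
  have hθ := cosh_sq_sub_sinh_sq θ
  have hwv : lor w v = 0 := (lor_comm w v).trans h.lor_vw
  constructor <;> simp only [_root_.boost, lor_add_left, lor_add_right, lor_smul_left,
    lor_smul_right, h.lor_uu, h.lor_vv, h.lor_ww, h.lor_uv, h.lor_uw, h.lor_vw, hwv] <;>
    linarith

theorem hasFrameDerivAt_of_isLorentzFrame {T N B : ℝ → V3} {N' B' : V3} {a b x : ℝ}
    (h : ∀ s, IsLorentzFrame (T s) (N s) (B s)) (hT : HasDerivAt T (a • N x + b • B x) x)
    (hN : HasDerivAt N N' x) (hB : HasDerivAt B B' x) :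
    HasFrameDerivAt T N B a b (lor N' (B x)) x := by
  have hBN : lor (B x) (N x) = 0 := (lor_comm _ _).trans (h x).lor_vw
  have hN'T : lor N' (T x) = a := by
    have := lor_deriv_add_lor_deriv_eq_zero (fun s ↦ (h s).lor_uv) hT hN
    rw [lor_add_left, lor_smul_left, lor_smul_left, (h x).lor_vv, hBN, lor_comm (T x)] at this
    linarith
  have hB'T : lor B' (T x) = -b := by
    have := lor_deriv_add_lor_deriv_eq_zero (fun s ↦ (h s).lor_uw) hT hB
    rw [lor_add_left, lor_smul_left, lor_smul_left, (h x).lor_ww, (h x).lor_vw,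
      lor_comm (T x)] at this
    linarith
  have hB'N : -lor B' (N x) = lor N' (B x) := by
    have := lor_deriv_add_lor_deriv_eq_zero (fun s ↦ (h s).lor_vw) hN hB
    rw [lor_comm (N x)] at this
    linarith
  have hN'N : lor N' (N x) = 0 := lor_deriv_self_eq_zero (fun s ↦ (h s).lor_vv) hN
  have hB'B : lor B' (B x) = 0 := lor_deriv_self_eq_zero (fun s ↦ (h s).lor_ww) hB
  refine ⟨hT, hN.congr_deriv ?_, hB.congr_deriv ?_⟩
  · simpa [hN'T, hN'N] using (h x).eq_sum N'
  · simpa [hB'T, hB'N, hB'B] using (h x).eq_sum B'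

/-- One component of the zero-curvature equation of the two frame connections, read off from the
`B`-component of `N_st = N_ts`. -/
theorem pdt_sub_pds_eq_of_hasFrameDeriv {T N B : ℝ × ℝ → V3} {a b c a' b' c' : ℝ × ℝ → ℝ}
    (hN : ContDiff ℝ 2 N) (h : ∀ p, IsLorentzFrame (T p) (N p) (B p))
    (hs : HasFrameDerivS T N B a b c) (ht : HasFrameDerivT T N B a' b' c') (p : ℝ × ℝ) :
    pdt c p - pds c' p = a' p * b p - a p * b' p := by
  have hNs (q) : pds N q = a q • T q + c q • B q := (hs q).normal.deriv
  have hNt (q) : pdt N q = a' q • T q + c' q • B q := (ht q).normal.deriv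
  have hBT : lor (B p) (T p) = 0 := (lor_comm _ _).trans (h p).lor_uw
  have hBN : lor (B p) (N p) = 0 := (lor_comm _ _).trans (h p).lor_vw
  have hc : c = fun q ↦ lor (pds N q) (B q) := by
    ext q
    simp [hNs, lor_add_left, lor_smul_left, (h q).lor_uw, (h q).lor_ww]
  have hc' : c' = fun q ↦ lor (pdt N q) (B q) := by
    ext q
    simp [hNt, lor_add_left, lor_smul_left, (h q).lor_uw, (h q).lor_ww]
  have hct : pdt c p = lor (pdt (pds N) p) (B p) - a p * b' p := by
    have hNst := (contDiff_pds (m := 1) hN (by norm_num)).differentiable (by simp) p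
    rw [hc]
    refine (hasDerivAt_lor (hasDerivAt_pdt hNst) (ht p).binormal).deriv.trans ?_
    simp only [hNs, lor_add_left, lor_add_right, lor_smul_left, lor_smul_right, (h p).lor_uu,
      (h p).lor_uv, hBT, hBN]
    ring
  have hcs : pds c' p = lor (pds (pdt N) p) (B p) - a' p * b p := by
    have hNts := (contDiff_pdt (m := 1) hN (by norm_num)).differentiable (by simp) p
    rw [hc']
    refine (hasDerivAt_lor (hasDerivAt_pds hNts) (hs p).binormal).deriv.trans ?_
    simp only [hNt, lor_add_left, lor_add_right, lor_smul_left, lor_smul_right, (h p).lor_uu,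
      (h p).lor_uv, hBT, hBN]
    ring
  rw [hct, hcs, pdt_pds_comm hN]
  ring

end LorentzFrame

section VortexFilament

variable {α T N B : ℝ × ℝ → V3} {κ τ : ℝ × ℝ → ℝ}

theorem lor_tangent_normal_eq_zero (hT : Differentiable ℝ T) (hTT : ∀ p, lor (T p) (T p) = 1)
    (hTs : ∀ p, pds T p = κ p • N p) {p : ℝ × ℝ} (hκ : κ p ≠ 0) : lor (T p) (N p) = 0 := by
  have hTsT : lor (pds T p) (T p) = 0 :=
    lor_deriv_self_eq_zero (fun s ↦ hTT (s, p.2)) (hasDerivAt_pds (hT p))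
  rw [hTs, lor_smul_left, lor_comm] at hTsT
  exact (mul_eq_zero.1 hTsT).resolve_left hκ

theorem binormal_eq_lcross_of_vortexFilament
    (hvfe : ∀ p, pdt α p = lcross (pds α p) (pds (pds α) p)) (hαs : pds α = T)
    (hαt : ∀ p, pdt α p = κ p • B p) (hTs : ∀ p, pds T p = κ p • N p) {p : ℝ × ℝ} (hκ : κ p ≠ 0) :
    B p = lcross (T p) (N p) := by
  refine smul_right_injective V3 hκ ?_
  calc κ p • B p = lcross (T p) (pds T p) := by rw [← hαt, hvfe, hαs]
    _ = κ p • lcross (T p) (N p) := by rw [hTs, lcross_smul_right]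

theorem pdt_tangent_of_pdt_eq_smul_binormal {p : ℝ × ℝ} (hα : ContDiff ℝ 2 α) (hαs : pds α = T)
    (hαt : ∀ p, pdt α p = κ p • B p) (hκ : DifferentiableAt ℝ κ p) (hB : DifferentiableAt ℝ B p)
    (hBs : pds B p = τ p • N p) : pdt T p = (κ p * τ p) • N p + pds κ p • B p :=
  calc pdt T p = pds (fun q ↦ κ q • B q) p := by rw [← hαs, pdt_pds_comm hα, funext hαt]
    _ = κ p • pds B p + pds κ p • B p := ((hasDerivAt_pds hκ).smul (hasDerivAt_pds hB)).deriv
    _ = (κ p * τ p) • N p + pds κ p • B p := by rw [hBs, smul_smul]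

theorem isLorentzFrame_of_vortexFilament (hT : Differentiable ℝ T)
    (hvfe : ∀ p, pdt α p = lcross (pds α p) (pds (pds α) p)) (hαs : pds α = T)
    (hTT : ∀ p, lor (T p) (T p) = 1) (hNN : ∀ p, lor (N p) (N p) = -1)
    (hαt : ∀ p, pdt α p = κ p • B p) (hTs : ∀ p, pds T p = κ p • N p) (hκ : ∀ p, κ p ≠ 0)
    (p : ℝ × ℝ) : IsLorentzFrame (T p) (N p) (B p) := by
  rw [binormal_eq_lcross_of_vortexFilament hvfe hαs hαt hTs (hκ p)]
  exact isLorentzFrame_lcross (hTT p) (hNN p) (lor_tangent_normal_eq_zero hT hTT hTs (hκ p))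

theorem hasFrameDerivT_of_pdt_eq_smul_binormal (hα : ContDiff ℝ 2 α) (hT : Differentiable ℝ T)
    (hN : Differentiable ℝ N) (hB : Differentiable ℝ B) (hκ : Differentiable ℝ κ)
    (hαs : pds α = T) (hαt : ∀ p, pdt α p = κ p • B p) (hBs : ∀ p, pds B p = τ p • N p)
    (h : ∀ p, IsLorentzFrame (T p) (N p) (B p)) :
    HasFrameDerivT T N B (fun p ↦ κ p * τ p) (pds κ) (fun p ↦ lor (pdt N p) (B p)) := fun p ↦
  have hTt : pdt T p = (κ p * τ p) • N p + pds κ p • B p :=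
    pdt_tangent_of_pdt_eq_smul_binormal hα hαs hαt (hκ p) (hB p) (hBs p)
  hasFrameDerivAt_of_isLorentzFrame (fun t ↦ h (p.1, t))
    ((hasDerivAt_pdt (hT p)).congr_deriv hTt) (hasDerivAt_pdt (hN p)) (hasDerivAt_pdt (hB p))

end VortexFilament

section ParallelFrame

variable {κ τ ρ θ : ℝ × ℝ → ℝ}

theorem exists_boost_angle (hκ : ContDiff ℝ ∞ κ) (hτ : ContDiff ℝ ∞ τ) (hρ : ContDiff ℝ ∞ ρ)
    (hcompat : ∀ p, pdt τ p - pds ρ p = -(κ p * pds κ p)) :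
    ∃ θ : ℝ × ℝ → ℝ, ContDiff ℝ ∞ θ ∧ (∀ p, pds θ p = -τ p) ∧
      ∀ p, pdt θ p = κ p ^ 2 / 2 - ρ p := by
  refine exists_contDiff_pds_eq_pdt_eq hτ.neg (((hκ.pow 2).div_const 2).sub hρ) fun p ↦ ?_
  have hκp := hasDerivAt_pds (hκ.differentiable (by simp) p)
  have hρp := hasDerivAt_pds (hρ.differentiable (by simp) p)
  calc pdt (fun q ↦ -τ q) p = -pdt τ p :=
        (hasDerivAt_pdt (hτ.differentiable (by simp) p)).neg.deriv
    _ = κ p * pds κ p - pds ρ p := by linarith [hcompat p]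
    _ = pds (fun q ↦ κ q ^ 2 / 2 - ρ q) p := by
      refine .symm ((((hκp.pow 2).div_const 2).sub hρp).deriv.trans ?_)
      ring

variable {V : Type*} [NormedAddCommGroup V] [NormedSpace ℝ V] {T N B : ℝ × ℝ → V}

theorem hasFrameDerivS_of_frenet (hT : Differentiable ℝ T) (hN : Differentiable ℝ N)
    (hB : Differentiable ℝ B) (hTs : ∀ p, pds T p = κ p • N p)
    (hNs : ∀ p, pds N p = κ p • T p + τ p • B p) (hBs : ∀ p, pds B p = τ p • N p) :
    HasFrameDerivS T N B κ 0 τ := fun p ↦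
  ⟨(hasDerivAt_pds (hT p)).congr_deriv (by simp [hTs]),
    (hasDerivAt_pds (hN p)).congr_deriv (hNs p),
    (hasDerivAt_pds (hB p)).congr_deriv (by simp [hBs])⟩

theorem hasFrameDerivS_boost (hθ : Differentiable ℝ θ) (hθs : ∀ p, pds θ p = -τ p)
    (h : HasFrameDerivS T N B κ 0 τ) :
    HasFrameDerivS T (fun p ↦ boost (θ p) (N p) (B p)) (fun p ↦ boost (θ p) (B p) (N p))
      (fun p ↦ κ p * cosh (θ p)) (fun p ↦ -(κ p * sinh (θ p))) 0 := fun p ↦ by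
  simpa [hθs] using (h p).boost (hasDerivAt_pds (hθ p))

theorem hasFrameDerivT_boost (hκ : Differentiable ℝ κ) (hθ : Differentiable ℝ θ)
    (hθs : ∀ p, pds θ p = -τ p) (hθt : ∀ p, pdt θ p = κ p ^ 2 / 2 - ρ p)
    (h : HasFrameDerivT T N B (fun p ↦ κ p * τ p) (pds κ) ρ) :
    HasFrameDerivT T (fun p ↦ boost (θ p) (N p) (B p)) (fun p ↦ boost (θ p) (B p) (N p))
      (pds fun p ↦ -(κ p * sinh (θ p))) (pds fun p ↦ κ p * cosh (θ p))
      (fun p ↦ ((κ p * cosh (θ p)) ^ 2 - (-(κ p * sinh (θ p))) ^ 2) / 2) := fun p ↦ by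
  have hκp := hasDerivAt_pds (hκ p)
  have hθp := hasDerivAt_pds (hθ p)
  convert (h p).boost (hasDerivAt_pdt (hθ p)) using 1
  · refine (hκp.mul hθp.sinh).neg.deriv.trans ?_
    rw [hθs]
    ring
  · refine (hκp.mul hθp.cosh).deriv.trans ?_
    rw [hθs]
    ring
  · rw [hθt]
    linear_combination κ p ^ 2 / 2 * cosh_sq_sub_sinh_sq (θ p)

end ParallelFrame

/-- For a smooth solution `α` of the vortex filament equation whose
curves `α(·,t)` are unit-speed spacelike with timelike principal normal, with smooth
Frenet frame `(T,N,B)` (`⟨T,T⟩_L = ⟨B,B⟩_L = 1`, `⟨N,N⟩_L = −1`, `α_t = κB`,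
`Tₛ = κN`, `Nₛ = κT + τB`, `Bₛ = τN`, `κ > 0`), there exists a parallel normal frame
`(T,E₁,E₂)` with `⟨E₁,E₁⟩_L = −1`, `⟨E₂,E₂⟩_L = 1` and principal curvatures
`k₁, k₂` satisfying the stated `s`- and `t`-evolution equations. -/
theorem statement12 (α T N B : ℝ × ℝ → V3) (κ τ : ℝ × ℝ → ℝ)
    (hα : ContDiff ℝ (⊤ : ℕ∞) α) (hT : ContDiff ℝ (⊤ : ℕ∞) T) (hN : ContDiff ℝ (⊤ : ℕ∞) N)
    (hB : ContDiff ℝ (⊤ : ℕ∞) B) (hκ : ContDiff ℝ (⊤ : ℕ∞) κ) (hτ : ContDiff ℝ (⊤ : ℕ∞) τ)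
    (hvfe : ∀ p, pdt α p = lcross (pds α p) (pds (pds α) p))
    (hαs : ∀ p, pds α p = T p)
    (hTT : ∀ p, lor (T p) (T p) = 1)
    (hNN : ∀ p, lor (N p) (N p) = -1)
    (hBB : ∀ p, lor (B p) (B p) = 1)
    (hαt : ∀ p, pdt α p = κ p • B p)
    (hTs : ∀ p, pds T p = κ p • N p)
    (hNs : ∀ p, pds N p = κ p • T p + τ p • B p)
    (hBs : ∀ p, pds B p = τ p • N p)
    (hκpos : ∀ p, 0 < κ p) :
    ∃ E₁ E₂ : ℝ × ℝ → V3, ∃ k₁ k₂ : ℝ × ℝ → ℝ,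
      ContDiff ℝ (⊤ : ℕ∞) E₁ ∧ ContDiff ℝ (⊤ : ℕ∞) E₂ ∧ ContDiff ℝ (⊤ : ℕ∞) k₁ ∧ ContDiff ℝ (⊤ : ℕ∞) k₂ ∧
      (∀ p, lor (E₁ p) (E₁ p) = -1) ∧
      (∀ p, lor (E₂ p) (E₂ p) = 1) ∧
      (∀ p, lor (T p) (E₁ p) = 0) ∧
      (∀ p, lor (T p) (E₂ p) = 0) ∧
      (∀ p, lor (E₁ p) (E₂ p) = 0) ∧
      (∀ p, pds T p = k₁ p • E₁ p + k₂ p • E₂ p) ∧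
      (∀ p, pds E₁ p = k₁ p • T p) ∧
      (∀ p, pds E₂ p = -(k₂ p) • T p) ∧
      (∀ p, pdt T p = (pds k₂ p) • E₁ p + (pds k₁ p) • E₂ p) ∧
      (∀ p, pdt E₁ p = (pds k₂ p) • T p + ((k₁ p ^ 2 - k₂ p ^ 2) / 2) • E₂ p) ∧
      (∀ p, pdt E₂ p = -(pds k₁ p) • T p + ((k₁ p ^ 2 - k₂ p ^ 2) / 2) • E₁ p) := by
  have hTd : Differentiable ℝ T := hT.differentiable (by simp)
  have hNd : Differentiable ℝ N := hN.differentiable (by simp)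
  have hBd : Differentiable ℝ B := hB.differentiable (by simp)
  have hκd : Differentiable ℝ κ := hκ.differentiable (by simp)
  have hframe := isLorentzFrame_of_vortexFilament hTd hvfe (funext hαs) hTT hNN hαt hTs
    fun p ↦ (hκpos p).ne'
  have hs : HasFrameDerivS T N B κ 0 τ := hasFrameDerivS_of_frenet hTd hNd hBd hTs hNs hBs
  have ht := hasFrameDerivT_of_pdt_eq_smul_binormal (hα.of_le ENat.LEInfty.out) hTd hNd hBd hκd
    (funext hαs) hαt hBs hframe
  obtain ⟨θ, hθ, hθs, hθt⟩ := exists_boost_angle hκ hτ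
    (contDiff_lor (contDiff_pdt hN (by simp)) hB) fun p ↦ by
      simpa using pdt_sub_pds_eq_of_hasFrameDeriv (hN.of_le ENat.LEInfty.out) hframe hs ht p
  have hθd : Differentiable ℝ θ := hθ.differentiable (by simp)
  let E₁ (p) := boost (θ p) (N p) (B p)
  let E₂ (p) := boost (θ p) (B p) (N p)
  have hE (p) : IsLorentzFrame (T p) (E₁ p) (E₂ p) := (hframe p).boost (θ p)
  have hEs := hasFrameDerivS_boost hθd hθs hs
  have hEt := hasFrameDerivT_boost hκd hθd hθs hθt ht
  exact ⟨E₁, E₂, fun p ↦ κ p * cosh (θ p), fun p ↦ -(κ p * sinh (θ p)),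
    contDiff_boost hθ hN hB, contDiff_boost hθ hB hN, hκ.mul hθ.cosh, (hκ.mul hθ.sinh).neg,
    fun p ↦ (hE p).lor_vv, fun p ↦ (hE p).lor_ww,
    fun p ↦ (hE p).lor_uv, fun p ↦ (hE p).lor_uw, fun p ↦ (hE p).lor_vw,
    fun p ↦ (hEs p).tangent.deriv, fun p ↦ (hEs p).normal.deriv.trans (by simp),
    fun p ↦ (hEs p).binormal.deriv.trans (by simp), fun p ↦ (hEt p).tangent.deriv,
    fun p ↦ (hEt p).normal.deriv, fun p ↦ (hEt p).binormal.deriv⟩
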